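/- arXiv:2109.14497 — 2 statements merged into one kernel-verified Lean document; each statement's English description precedes it below -/
import Mathlib

section
/- For 0 ≤ h < i ≤ n, there exists a valid partition of the prefix (l_1, …, l_i) whose last block is (l_{h+1}, …, l_i) if and only if x_h + y_h ≤ x_i. -/
/-- `pSum L i` is `x_i`: the sum of the first `i` elements of `L` (so `pSum L 0 = 0`). -/
def pSum (L : List ℝ) (i : ℕ) : ℝ := (L.take i).sum

/-- A valid partition of `L`: a partition of `L` into nonempty consecutive blocks
whose totals are non-decreasing from left to right. -/
def ValidPartition (L : List ℝ) (P : List (List ℝ)) : Prop :=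
  P.flatten = L ∧ (∀ B ∈ P, B ≠ []) ∧ List.Chain' (· ≤ ·) (P.map List.sum)

/-- The total of the last block of a partition (`0` for the empty partition). -/
def lastTotal (P : List (List ℝ)) : ℝ := (P.map List.sum).getLastD 0

/-- `wrapLen L` is the wrapping length `y_{|L|}`: the minimum, over all valid
partitions of `L`, of the total of the last block (with `wrapLen [] = 0`,
realized by the empty partition). -/
noncomputable def wrapLen (L : List ℝ) : ℝ :=
  sInf {t | ∃ P, ValidPartition L P ∧ lastTotal P = t}

/-!
Removing the last block `B` turns a valid partition of `A ++ B` into a valid partition of `A` whose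
last total is at most `B.sum`, and this can be undone. Only finitely many last totals occur among
the valid partitions of `A`, so `wrapLen A` is attained, and such a partition of `A` exists exactly
when `wrapLen A ≤ B.sum`. For prefixes, `B.sum` is the difference `x_i - x_h`.
-/

theorem lastTotal_nil : lastTotal [] = 0 := rfl

theorem lastTotal_concat (Q : List (List ℝ)) (B : List ℝ) : lastTotal (Q ++ [B]) = B.sum := by
  simp [lastTotal]

theorem isChain_map_sum_concat_iff {Q : List (List ℝ)} {B : List ℝ} (hQ : Q = [] → 0 ≤ B.sum) :
    ((Q ++ [B]).map List.sum).IsChain (· ≤ ·) ↔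
      (Q.map List.sum).IsChain (· ≤ ·) ∧ lastTotal Q ≤ B.sum := by
  rcases List.eq_nil_or_concat' Q with rfl | ⟨R, C, rfl⟩
  · simpa [lastTotal_nil] using hQ
  · rw [List.map_append, List.isChain_append, lastTotal_concat]
    simp

theorem validPartition_append_concat_iff {A B : List ℝ} {Q : List (List ℝ)} (hB : B ≠ [])
    (hA : A = [] → 0 ≤ B.sum) :
    ValidPartition (A ++ B) (Q ++ [B]) ↔ ValidPartition A Q ∧ lastTotal Q ≤ B.sum := by
  have flatten_iff : (Q ++ [B]).flatten = A ++ B ↔ Q.flatten = A := by simp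
  have ne_nil_iff : (∀ C ∈ Q ++ [B], C ≠ []) ↔ ∀ C ∈ Q, C ≠ [] := by
    simp only [List.forall_mem_append, List.forall_mem_singleton, hB, ne_eq, not_false_eq_true,
      and_true]
  unfold ValidPartition
  rw [flatten_iff, ne_nil_iff, and_assoc, and_assoc]
  refine and_congr_right fun hflat => and_congr_right fun _ => isChain_map_sum_concat_iff ?_
  rintro rfl
  exact hA hflat.symm

theorem exists_validPartition (A : List ℝ) : ∃ P, ValidPartition A P := by
  rcases eq_or_ne A [] with rfl | hA
  · exact ⟨[], by simp, by simp, List.isChain_nil⟩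
  · exact ⟨[A], by simp, by simpa using hA, List.isChain_singleton _⟩

theorem ValidPartition.exists_suffix_sum_eq_lastTotal {A : List ℝ} {P : List (List ℝ)}
    (hP : ValidPartition A P) : ∃ B, B <:+ A ∧ B.sum = lastTotal P := by
  rcases List.eq_nil_or_concat' P with rfl | ⟨Q, B, rfl⟩
  · exact ⟨[], List.nil_suffix, rfl⟩
  · exact ⟨B, ⟨Q.flatten, by simpa using hP.1⟩, (lastTotal_concat Q B).symm⟩

theorem finite_setOf_lastTotal (A : List ℝ) :
    {t | ∃ P, ValidPartition A P ∧ lastTotal P = t}.Finite := by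
  refine (A.tails.finite_toSet.image List.sum).subset ?_
  rintro _ ⟨P, hP, rfl⟩
  obtain ⟨B, hBA, hsum⟩ := hP.exists_suffix_sum_eq_lastTotal
  exact ⟨B, (List.mem_tails B A).2 hBA, hsum⟩

theorem isLeast_wrapLen (A : List ℝ) :
    IsLeast {t | ∃ P, ValidPartition A P ∧ lastTotal P = t} (wrapLen A) := by
  obtain ⟨P, hP⟩ := exists_validPartition A
  have hfin := finite_setOf_lastTotal A
  exact ⟨Set.Nonempty.csInf_mem ⟨_, P, hP, rfl⟩ hfin, fun _ ht => csInf_le hfin.bddBelow ht⟩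

theorem wrapLen_le_iff {A : List ℝ} {t : ℝ} :
    wrapLen A ≤ t ↔ ∃ P, ValidPartition A P ∧ lastTotal P ≤ t := by
  constructor
  · intro hle
    obtain ⟨P, hP, hlast⟩ := (isLeast_wrapLen A).1
    exact ⟨P, hP, hlast.trans_le hle⟩
  · rintro ⟨P, hP, hle⟩
    exact ((isLeast_wrapLen A).2 ⟨P, hP, rfl⟩).trans hle

theorem exists_validPartition_append_getLast?_iff {A B : List ℝ} (hB : B ≠ [])
    (hA : A = [] → 0 ≤ B.sum) :
    (∃ P, ValidPartition (A ++ B) P ∧ P.getLast? = some B) ↔ wrapLen A ≤ B.sum :=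
  calc (∃ P, ValidPartition (A ++ B) P ∧ P.getLast? = some B)
    _ ↔ ∃ Q, ValidPartition (A ++ B) (Q ++ [B]) := by
      simp only [List.getLast?_eq_some_iff]
      exact ⟨fun ⟨_, hP, Q, hQ⟩ => ⟨Q, hQ ▸ hP⟩, fun ⟨Q, hQ⟩ => ⟨_, hQ, Q, rfl⟩⟩
    _ ↔ ∃ Q, ValidPartition A Q ∧ lastTotal Q ≤ B.sum :=
      exists_congr fun _ => validPartition_append_concat_iff hB hA
    _ ↔ wrapLen A ≤ B.sum := wrapLen_le_iff.symm

theorem take_append_drop_take {α : Type*} (L : List α) {h i : ℕ} (hhi : h ≤ i) :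
    L.take h ++ (L.take i).drop h = L.take i := by
  simpa only [List.take_take, min_eq_left hhi] using List.take_append_drop h (L.take i)

theorem pSum_add_sum_drop_take (L : List ℝ) {h i : ℕ} (hhi : h ≤ i) :
    pSum L h + ((L.take i).drop h).sum = pSum L i := by
  rw [pSum, pSum, ← List.sum_append, take_append_drop_take L hhi]

theorem pSum_nonneg {L : List ℝ} (hL : ∀ l ∈ L, 0 ≤ l) (i : ℕ) : 0 ≤ pSum L i :=
  List.sum_nonneg fun l hl => hL l (List.mem_of_mem_take hl)

/-- At `h = 0` the single block is always a valid partition, while the right-hand side reads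
`0 ≤ x_i`; this is where `hsum` comes from. -/
theorem stmt_1_general (L : List ℝ) (h i : ℕ) (hhi : h < i) (hin : i ≤ L.length)
    (hsum : h = 0 → 0 ≤ pSum L i) :
    (∃ P, ValidPartition (L.take i) P ∧ P.getLast? = some ((L.take i).drop h)) ↔
      pSum L h + wrapLen (L.take h) ≤ pSum L i := by
  have hlast_ne : (L.take i).drop h ≠ [] := by
    rw [ne_eq, List.drop_eq_nil_iff, List.length_take_of_le hin]
    exact hhi.not_ge
  have hlast_nonneg : L.take h = [] → 0 ≤ ((L.take i).drop h).sum := by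
    intro htake
    have hh : h = 0 := by simpa [(hhi.trans_le hin).le] using congrArg List.length htake
    subst hh
    exact hsum rfl
  rw [← pSum_add_sum_drop_take L hhi.le, add_le_add_iff_left,
    ← exists_validPartition_append_getLast?_iff hlast_ne hlast_nonneg,
    take_append_drop_take L hhi.le]

/-- For `0 ≤ h < i ≤ n`, there exists a valid partition of the prefix
`(l_1, …, l_i)` whose last block is `(l_{h+1}, …, l_i)` if and only if
`x_h + y_h ≤ x_i`. -/
theorem stmt_1 (L : List ℝ) (hL : ∀ l ∈ L, 0 < l) (h i : ℕ) (hhi : h < i)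
    (hin : i ≤ L.length) :
    (∃ P, ValidPartition (L.take i) P ∧ P.getLast? = some ((L.take i).drop h)) ↔
      pSum L h + wrapLen (L.take h) ≤ pSum L i :=
  stmt_1_general L h i hhi hin fun _ => pSum_nonneg (fun l hl => (hL l hl).le) i
end

section
/- The recursively defined partition Π(L) is a valid partition of L, and the total of its last block equals y_n, the minimum possible last-block total over all valid partitions of L. -/
open Classical in
/-- The recursively defined partition `Π(L)`: for a nonempty `L` of length `i`,
let `h` be the largest index `0 ≤ h < i` with `x_h + y_h ≤ x_i`, take
`(l_{h+1}, …, l_i)` as the last block, and recurse on `(l_1, …, l_h)`. -/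
noncomputable def piPart (L : List ℝ) : List (List ℝ) :=
  if L.length = 0 then []
  else
    let h := Nat.findGreatest
      (fun h => pSum L h + wrapLen (L.take h) ≤ pSum L L.length) (L.length - 1)
    piPart (L.take h) ++ [L.drop h]
termination_by L.length
decreasing_by
  have hle : Nat.findGreatest
      (fun h => pSum L h + wrapLen (L.take h) ≤ pSum L L.length) (L.length - 1)
      ≤ L.length - 1 := Nat.findGreatest_le _
  simp only [List.length_take]
  omega

/-!
The total of a block starting after position `k` and running to the end of `L` is antitone in `k`,
so a light last block means a late cut. If a valid partition of `L` has its last cut at `k`, then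
the partition it induces on the prefix gives `y_k ≤ x_n - x_k`, so `k` is at most the largest index
`h` with this property: no valid partition has a lighter last block than `Π(L)`. Conversely, the
cut at `h` is admissible because, by induction, `Π` of the prefix ends in a block of total exactly
`y_h`.
-/

section

variable {L B : List ℝ} {P Q : List (List ℝ)}

theorem lastTotal_append_singleton : lastTotal (Q ++ [B]) = B.sum := by
  simp [lastTotal]

theorem validPartition_iff_isChain :
    ValidPartition L P ↔
      P.flatten = L ∧ (∀ B ∈ P, B ≠ []) ∧ List.IsChain (· ≤ ·) (P.map List.sum) :=
  Iff.rfl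

theorem forall_mem_getLast?_map_sum_le_iff {s : ℝ} (hs : 0 ≤ s) :
    (∀ x ∈ (Q.map List.sum).getLast?, x ≤ s) ↔ lastTotal Q ≤ s := by
  rw [lastTotal, List.getLastD_eq_getLast?]
  cases (Q.map List.sum).getLast? <;> simp [hs]

theorem validPartition_append_singleton_iff (hB : 0 ≤ B.sum) :
    ValidPartition L (Q ++ [B]) ↔
      Q.flatten ++ B = L ∧ B ≠ [] ∧ ValidPartition Q.flatten Q ∧ lastTotal Q ≤ B.sum := by
  have hchain : List.IsChain (· ≤ ·) ((Q ++ [B]).map List.sum) ↔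
      List.IsChain (· ≤ ·) (Q.map List.sum) ∧ lastTotal Q ≤ B.sum := by
    simp [← forall_mem_getLast?_map_sum_le_iff hB, List.isChain_append]
  simp only [validPartition_iff_isChain, hchain, List.flatten_append, List.flatten_singleton,
    List.mem_append, List.mem_singleton, or_imp, forall_and, forall_eq]
  tauto

theorem validPartition_nil_iff : ValidPartition [] P ↔ P = [] := by
  refine ⟨fun ⟨hflat, hne, _⟩ => ?_, ?_⟩
  · exact List.eq_nil_iff_forall_not_mem.2 fun B hB =>
      hne B hB (List.flatten_eq_nil_iff.1 hflat B hB)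
  · rintro rfl
    exact ⟨rfl, by simp, List.isChain_nil⟩

theorem lastTotal_nonneg (hL : ∀ l ∈ L, 0 ≤ l) (hP : ValidPartition L P) : 0 ≤ lastTotal P := by
  obtain ⟨rfl, -⟩ := hP
  rcases List.eq_nil_or_concat' P with rfl | ⟨Q, B, rfl⟩
  · simp [lastTotal]
  · rw [lastTotal_append_singleton]
    exact List.sum_nonneg fun l hl => hL l (by simp [hl])

theorem wrapLen_le_lastTotal (hL : ∀ l ∈ L, 0 ≤ l) (hP : ValidPartition L P) :
    wrapLen L ≤ lastTotal P :=
  csInf_le ⟨0, by rintro _ ⟨Q, hQ, rfl⟩; exact lastTotal_nonneg hL hQ⟩ ⟨P, hP, rfl⟩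

theorem wrapLen_nil : wrapLen [] = 0 := by
  simp [wrapLen, validPartition_nil_iff, lastTotal]

theorem antitone_sum_drop (hL : ∀ l ∈ L, 0 ≤ l) : Antitone fun k => (L.drop k).sum :=
  fun _ _ hkm => (List.drop_sublist_drop_left L hkm).sum_le_sum
    fun l hl => hL l (List.mem_of_mem_drop hl)

open Classical in
/-- The index `h` at which `Π(L)` cuts off its last block, for nonempty `L`. -/
noncomputable def lastCut (L : List ℝ) : ℕ :=
  Nat.findGreatest (fun h => pSum L h + wrapLen (L.take h) ≤ pSum L L.length) (L.length - 1)

theorem piPart_nil : piPart [] = [] := by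
  rw [piPart, if_pos List.length_nil]

theorem piPart_of_ne_nil (hne : L ≠ []) :
    piPart L = piPart (L.take (lastCut L)) ++ [L.drop (lastCut L)] := by
  rw [piPart, if_neg (List.length_eq_zero_iff.not.2 hne), lastCut]

theorem lastCut_lt_length (hne : L ≠ []) : lastCut L < L.length :=
  (Nat.findGreatest_le _).trans_lt (Nat.sub_one_lt (List.length_eq_zero_iff.not.2 hne))

theorem pSum_add_le_pSum_length_iff (h : ℕ) (y : ℝ) :
    pSum L h + y ≤ pSum L L.length ↔ y ≤ (L.drop h).sum := by
  rw [pSum, pSum, List.take_length, ← List.sum_take_add_sum_drop L h, add_le_add_iff_left]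

theorem le_lastCut {k : ℕ} (hk : k < L.length) (hle : wrapLen (L.take k) ≤ (L.drop k).sum) :
    k ≤ lastCut L :=
  Nat.le_findGreatest (Nat.le_sub_one_of_lt hk) ((pSum_add_le_pSum_length_iff k _).2 hle)

theorem wrapLen_take_lastCut_le (hL : ∀ l ∈ L, 0 ≤ l) :
    wrapLen (L.take (lastCut L)) ≤ (L.drop (lastCut L)).sum := by
  classical
  refine (pSum_add_le_pSum_length_iff _ _).1 (Nat.findGreatest_spec
    (P := fun h => pSum L h + wrapLen (L.take h) ≤ pSum L L.length) (Nat.zero_le _) ?_)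
  rw [pSum_add_le_pSum_length_iff, List.take_zero, wrapLen_nil]
  exact List.sum_nonneg hL

theorem sum_drop_lastCut_le_lastTotal (hL : ∀ l ∈ L, 0 ≤ l) (hne : L ≠ [])
    (hP : ValidPartition L P) : (L.drop (lastCut L)).sum ≤ lastTotal P := by
  rcases List.eq_nil_or_concat' P with rfl | ⟨Q, B, rfl⟩
  · exact absurd hP.1.symm hne
  have hflat : Q.flatten ++ B = L := by simpa using hP.1
  have hB : 0 ≤ B.sum := List.sum_nonneg fun l hl => hL l (by simp [← hflat, hl])
  obtain ⟨rfl, hBne, hQ, hle⟩ := (validPartition_append_singleton_iff hB).1 hP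
  have hcut : Q.flatten.length ≤ lastCut (Q.flatten ++ B) := by
    refine le_lastCut (by simpa using List.length_pos_iff.2 hBne) ?_
    rw [List.take_left, List.drop_left]
    exact (wrapLen_le_lastTotal (fun l hl => hL l (List.mem_append_left B hl)) hQ).trans hle
  calc ((Q.flatten ++ B).drop (lastCut (Q.flatten ++ B))).sum
      ≤ ((Q.flatten ++ B).drop Q.flatten.length).sum := antitone_sum_drop hL hcut
    _ = lastTotal (Q ++ [B]) := by rw [List.drop_left, lastTotal_append_singleton]

theorem validPartition_append_drop_lastCut (hL : ∀ l ∈ L, 0 ≤ l) (hne : L ≠ [])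
    (hP : ValidPartition (L.take (lastCut L)) P)
    (hmin : lastTotal P = wrapLen (L.take (lastCut L))) :
    ValidPartition L (P ++ [L.drop (lastCut L)]) := by
  have hsum : 0 ≤ (L.drop (lastCut L)).sum :=
    List.sum_nonneg fun l hl => hL l (List.mem_of_mem_drop hl)
  have hflat : P.flatten = L.take (lastCut L) := hP.1
  refine (validPartition_append_singleton_iff hsum).2 ⟨?_, ?_, hflat ▸ hP, ?_⟩
  · rw [hflat, List.take_append_drop]
  · exact List.drop_eq_nil_iff.not.2 (lastCut_lt_length hne).not_ge
  · exact hmin.trans_le (wrapLen_take_lastCut_le hL)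

end

theorem stmt_6_general (L : List ℝ) (hL : ∀ l ∈ L, 0 ≤ l) :
    ValidPartition L (piPart L) ∧ lastTotal (piPart L) = wrapLen L := by
  rcases eq_or_ne L [] with rfl | hne
  · rw [piPart_nil, wrapLen_nil]
    exact ⟨validPartition_nil_iff.2 rfl, rfl⟩
  obtain ⟨hprefix, hmin⟩ :=
    stmt_6_general (L.take (lastCut L)) fun l hl => hL l (List.mem_of_mem_take hl)
  have hvalid : ValidPartition L (piPart L) :=
    piPart_of_ne_nil hne ▸ validPartition_append_drop_lastCut hL hne hprefix hmin
  refine ⟨hvalid, le_antisymm ?_ (wrapLen_le_lastTotal hL hvalid)⟩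
  refine le_csInf ⟨_, _, hvalid, rfl⟩ ?_
  rintro _ ⟨P, hP, rfl⟩
  rw [piPart_of_ne_nil hne, lastTotal_append_singleton]
  exact sum_drop_lastCut_le_lastTotal hL hne hP
termination_by L.length
decreasing_by simpa using lastCut_lt_length hne

/-- The recursively defined partition `Π(L)` is a valid partition of
`L`, and the total of its last block equals `y_n`, the minimum possible
last-block total over all valid partitions of `L`. -/
theorem stmt_6 (L : List ℝ) (hL : ∀ l ∈ L, 0 < l) :
    ValidPartition L (piPart L) ∧ lastTotal (piPart L) = wrapLen L := by
  exact stmt_6_general L fun l hl => (hL l hl).le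
end
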